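/- Let R be a Dedekind domain and M an R-module. If Tor_1^R(M, M) = 0, then M is a flat R-module. -/

import Mathlib

open CategoryTheory

open TensorProduct in
theorem flat_core (R : Type) [CommRing R] [IsDomain R] [IsDedekindDomain R]
    {M P0 P1 P2 : Type} [AddCommGroup M] [Module R M] [AddCommGroup P0] [Module R P0]
    [AddCommGroup P1] [Module R P1] [AddCommGroup P2] [Module R P2]
    [Module.IsTorsionFree R P0]
    (f2 : P2 →ₗ[R] P1) (f1 : P1 →ₗ[R] P0) (f0 : P0 →ₗ[R] M)
    (h21 : f1 ∘ₗ f2 = 0) (h10 : Function.Exact f1 f0) (h0 : Function.Surjective f0)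
    (hT : Function.Exact (f2.lTensor M) (f1.lTensor M)) : Module.Flat R M := by
  have hinj : ∀ t : M ⊗[R] (LinearMap.range f1),
      (LinearMap.range f1).subtype.lTensor M t = 0 → t = 0 := by
    intro t ht
    obtain ⟨s, rfl⟩ := LinearMap.lTensor_surjective M f1.surjective_rangeRestrict t
    rw [← LinearMap.lTensor_comp_apply, LinearMap.subtype_comp_codRestrict] at ht
    obtain ⟨u, rfl⟩ := (hT s).1 ht
    rw [← LinearMap.lTensor_comp_apply]
    have : f1.rangeRestrict ∘ₗ f2 = 0 := by
      ext z
      exact LinearMap.congr_fun h21 z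
    rw [this]
    simp
  rw [IsDedekindDomain.flat_iff_torsion_eq_bot, eq_bot_iff]
  rintro x ⟨⟨a, ha⟩, hax⟩
  replace hax : a • x = 0 := hax
  obtain ⟨y, rfl⟩ := h0 x
  set K := LinearMap.range f1 with hK
  have hmemK : ∀ z, z ∈ K ↔ f0 z = 0 := fun z => (h10 z).symm
  set φ : R →ₗ[R] M := LinearMap.toSpanSingleton R M (f0 y) with hφ
  set I : Ideal R := LinearMap.ker φ with hI
  have hIm : ∀ r, r ∈ I ↔ r • f0 y = 0 := fun r => by simp [hI, hφ]
  have hψ : Function.Injective (I.liftQ φ le_rfl) := by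
    rw [← LinearMap.ker_eq_bot]
    exact Submodule.ker_liftQ_eq_bot _ _ _ le_rfl
  have hψ' := Module.Flat.rTensor_preserves_injective_linearMap (M := K) _ hψ
  have key : ∀ r ∈ I, ∃ k ∈ I • (⊤ : Submodule R K), (k : P0) = r • y := by
    intro r hr
    have hrK : r • y ∈ K := by
      rw [hmemK, map_smul]
      exact (hIm r).1 hr
    refine ⟨⟨r • y, hrK⟩, ?_, rfl⟩
    have h1 : (f0 y) ⊗ₜ[R] (⟨r • y, hrK⟩ : K) = 0 := by
      apply hinj
      simp only [LinearMap.lTensor_tmul, Submodule.subtype_apply]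
      rw [← TensorProduct.smul_tmul, (hIm r).1 hr, TensorProduct.zero_tmul]
    have h2 : (1 : R ⧸ I) ⊗ₜ[R] (⟨r • y, hrK⟩ : K) = 0 := by
      apply hψ'
      rw [map_zero, LinearMap.rTensor_tmul]
      convert h1
      change I.liftQ φ le_rfl (Submodule.Quotient.mk 1) = _
      rw [Submodule.liftQ_apply]
      simp [hφ]
    have h3 := congrArg (TensorProduct.quotTensorEquivQuotSMul K I) h2
    rw [TensorProduct.quotTensorEquivQuotSMul_mk_one_tmul, map_zero] at h3
    exact (Submodule.Quotient.mk_eq_zero _).1 h3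
  have ha0 : a ≠ 0 := nonZeroDivisors.ne_zero ha
  have haI : a ∈ I := (hIm a).2 hax
  obtain ⟨q, hq⟩ : I ∣ Ideal.span {a} := Ideal.dvd_span_singleton.2 haI
  have key2 : ∀ z ∈ q * I, ∃ k ∈ (q * I) • (⊤ : Submodule R K), (k : P0) = z • y := by
    intro z hz
    induction hz using Submodule.mul_induction_on' with
    | mem_mul_mem b hb r hr =>
      obtain ⟨k, hk, hk'⟩ := key r hr
      refine ⟨b • k, ?_, ?_⟩
      · rw [← smul_eq_mul, Submodule.smul_assoc]
        exact Submodule.smul_mem_smul hb hk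
      · simp [hk', mul_smul]
    | add z1 _ z2 _ h1 h2 =>
      obtain ⟨k1, hk1, e1⟩ := h1
      obtain ⟨k2, hk2, e2⟩ := h2
      exact ⟨k1 + k2, add_mem hk1 hk2, by simp [e1, e2, add_smul]⟩
  rw [mul_comm, ← hq] at key2
  obtain ⟨k, hk, e⟩ := key2 a (Ideal.mem_span_singleton_self a)
  rw [Submodule.ideal_span_singleton_smul] at hk
  obtain ⟨k', -, rfl⟩ := (Submodule.mem_smul_pointwise_iff_exists _ _ _).1 hk
  have hy : (k' : P0) = y := smul_right_injective P0 ha0 e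
  rw [Submodule.mem_bot, ← hmemK, ← hy]
  exact k'.2

/-- Let `R` be a Dedekind domain and `M` an `R`-module.
If `Tor₁^R(M, M) = 0`, then `M` is a flat `R`-module. -/
theorem stmt_0 (R : Type) [CommRing R] [IsDomain R] [IsDedekindDomain R]
    (M : Type) [AddCommGroup M] [Module R M]
    (h : Limits.IsZero (((Tor (ModuleCat R) 1).obj (ModuleCat.of R M)).obj (ModuleCat.of R M))) :
    Module.Flat R M := by
  obtain ⟨P⟩ := (HasProjectiveResolutions.out (ModuleCat.of R M)).out
  have hz := Limits.IsZero.of_iso h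
    (P.isoLeftDerivedObj ((MonoidalCategory.tensoringLeft (ModuleCat R)).obj
      (ModuleCat.of R M)) 1).symm
  have hex := (HomologicalComplex.exactAt_iff_isZero_homology _ _).2 hz
  have hex2 := (HomologicalComplex.exactAt_iff' _ 2 1 0 (by simp) (by simp)).1 hex
  have hT := (ShortComplex.ShortExact.moduleCat_exact_iff_function_exact _).1 hex2
  have h10 := (ShortComplex.ShortExact.moduleCat_exact_iff_function_exact _).1
    (ShortComplex.exact_of_g_is_cokernel
      (ShortComplex.mk _ _ P.complex_d_comp_π_f_zero) P.isColimitCokernelCofork)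
  have h0 := (ModuleCat.epi_iff_surjective (P.π.f 0)).1 inferInstance
  have hp : Module.Projective R (P.complex.X 0) :=
    (IsProjective.iff_projective _).2 (P.projective 0)
  have h21 := congrArg ModuleCat.Hom.hom (P.complex.d_comp_d 2 1 0)
  have : Module.IsTorsionFree R (P.complex.X 0) := by
    rw [Submodule.isTorsionFree_iff_torsion_eq_bot]
    exact Module.Flat.torsion_eq_bot
  exact flat_core R (P.complex.d 2 1).hom (P.complex.d 1 0).hom (P.π.f 0).hom h21 h10 h0 hT
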